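/- arXiv:2404.01788 — 2 statements merged into one kernel-verified Lean document; each statement's English description precedes it below -/
import Mathlib

section
/- For every positive integer n, there exists a bijection Φ from the set of permutations of {1,...,n} to itself such that for every permutation π: Φ(π)(1) = π(1), sign(Φ(π)) = sign(π), and depth(Φ(π)) = drp(π). -/
open Finset

/-- The one-line notation value of `π` at position `k ∈ {1,…,n}`:
`oneLine π k = π(k)` with `1`-indexed positions and values. -/
def oneLine {n : ℕ} (π : Equiv.Perm (Fin n)) (k : ℕ) : ℕ :=
  if h : k - 1 < n then ((π ⟨k - 1, h⟩ : Fin n) : ℕ) + 1 else k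

/-- `SUC(π) = {i ∈ {1,…,n-1} : π(i+1) = π(i)+1}` (position set). -/
def SUC {n : ℕ} (π : Equiv.Perm (Fin n)) : Finset ℕ :=
  (Finset.Icc 1 (n - 1)).filter (fun i => oneLine π (i + 1) = oneLine π i + 1)

/-- `FIX(π) = {i ∈ {1,…,n-1} : π(i) = i}` (position set). -/
def FIX {n : ℕ} (π : Equiv.Perm (Fin n)) : Finset ℕ :=
  (Finset.Icc 1 (n - 1)).filter (fun i => oneLine π i = i)

/-- `Asc₂(π) = {π(i+1) : i ∈ {1,…,n-1}, π(i+1) ≥ π(i)+2}` (value set). -/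
def Asc2 {n : ℕ} (π : Equiv.Perm (Fin n)) : Finset ℕ :=
  ((Finset.Icc 1 (n - 1)).filter (fun i => oneLine π i + 2 ≤ oneLine π (i + 1))).image
    (fun i => oneLine π (i + 1))

/-- `Des(π) = {π(i+1) : i ∈ {1,…,n-1}, π(i) > π(i+1)}` (value set). -/
def DesSet {n : ℕ} (π : Equiv.Perm (Fin n)) : Finset ℕ :=
  ((Finset.Icc 1 (n - 1)).filter (fun i => oneLine π (i + 1) < oneLine π i)).image
    (fun i => oneLine π (i + 1))

/-- `Suc(π) = {π(i+1) : i ∈ {1,…,n-1}, π(i+1) = π(i)+1}` (value set). -/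
def SucSet {n : ℕ} (π : Equiv.Perm (Fin n)) : Finset ℕ :=
  ((Finset.Icc 1 (n - 1)).filter (fun i => oneLine π (i + 1) = oneLine π i + 1)).image
    (fun i => oneLine π (i + 1))

/-- `Aexc(π) = {π(i) : i ∈ {2,…,n}, π(i) < i}` (value set). -/
def Aexc {n : ℕ} (π : Equiv.Perm (Fin n)) : Finset ℕ :=
  ((Finset.Icc 2 n).filter (fun i => oneLine π i < i)).image (fun i => oneLine π i)

/-- `Êxc(π) = {π(i) : i ∈ {2,…,n}, π(i) > i}` (value set). -/
def ExcHat {n : ℕ} (π : Equiv.Perm (Fin n)) : Finset ℕ :=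
  ((Finset.Icc 2 n).filter (fun i => i < oneLine π i)).image (fun i => oneLine π i)

/-- `F̂ix(π) = {π(i) : i ∈ {2,…,n}, π(i) = i}` (value set). -/
def FixHat {n : ℕ} (π : Equiv.Perm (Fin n)) : Finset ℕ :=
  ((Finset.Icc 2 n).filter (fun i => oneLine π i = i)).image (fun i => oneLine π i)

/-- `depth(π) = ∑_{i : π(i) > i} (π(i) − i)`. -/
def depthStat {n : ℕ} (π : Equiv.Perm (Fin n)) : ℕ :=
  ∑ i ∈ (Finset.Icc 1 n).filter (fun i => i < oneLine π i), (oneLine π i - i)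

/-- `drp(π) = ∑_{i ∈ {1,…,n-1} : π(i) > π(i+1)} (π(i) − π(i+1))`. -/
def drpStat {n : ℕ} (π : Equiv.Perm (Fin n)) : ℕ :=
  ∑ i ∈ (Finset.Icc 1 (n - 1)).filter (fun i => oneLine π (i + 1) < oneLine π i),
    (oneLine π i - oneLine π (i + 1))

/-- `exc(π) = |{i ∈ {1,…,n} : π(i) > i}|`. -/
def excNum {n : ℕ} (π : Equiv.Perm (Fin n)) : ℕ :=
  ((Finset.Icc 1 n).filter (fun i => i < oneLine π i)).card

/-- `nexc(π) = |{i ∈ {1,…,n} : π(i) < i}|`. -/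
def nexcNum {n : ℕ} (π : Equiv.Perm (Fin n)) : ℕ :=
  ((Finset.Icc 1 n).filter (fun i => oneLine π i < i)).card

/-- `des(π) = |{i ∈ {1,…,n-1} : π(i) > π(i+1)}|`. -/
def desNum {n : ℕ} (π : Equiv.Perm (Fin n)) : ℕ :=
  ((Finset.Icc 1 (n - 1)).filter (fun i => oneLine π (i + 1) < oneLine π i)).card

/-- `asc(π) = |{i ∈ {1,…,n-1} : π(i) < π(i+1)}|`. -/
def ascNum {n : ℕ} (π : Equiv.Perm (Fin n)) : ℕ :=
  ((Finset.Icc 1 (n - 1)).filter (fun i => oneLine π i < oneLine π (i + 1))).card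

/-- `inv(π) = |{(i,j) : 1 ≤ i < j ≤ n, π(i) > π(j)}|`. -/
def invNum {n : ℕ} (π : Equiv.Perm (Fin n)) : ℕ :=
  (((Finset.Icc 1 n) ×ˢ (Finset.Icc 1 n)).filter
    (fun p : ℕ × ℕ => p.1 < p.2 ∧ oneLine π p.2 < oneLine π p.1)).card

/-!
Number positions and letters from `0` and let the letters carry arbitrary increasing weights; then
both statistics satisfy the same recursion. The drops of the word `a e` are those of `e` together
with the drop from `a` to the first letter of `e`. On the depth side, let `e` act on the letters
other than `a` and precompose with the transposition `(0 a)`: the result still begins with `a`, and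
its depth exceeds that of `e` by the very same drop. Iterating yields a bijection that preserves the
first letter and carries `drp` to `depth`, but prepending `a` to the word multiplies the sign by
`(-1) ^ a`, whereas the transposition multiplies it by `-1`. The sign can be repaired for free: if
the first letter is at least `2`, then the letters `0` and `1` occur at positions at least `1`,
where they are not excedances, so exchanging them changes the sign but not the depth.
-/

section DropToDepth

open Equiv Equiv.Perm

variable {n : ℕ}

/-- The permutation whose one-line notation is the letter `a` followed by a word in the remaining
letters that is ordered like `e`. -/
def consLetter (a : Fin (n + 1)) (e : Perm (Fin n)) : Perm (Fin (n + 1)) :=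
  a.cycleRange.symm * decomposeFin.symm (0, e)

@[simp]
theorem consLetter_zero (a : Fin (n + 1)) (e : Perm (Fin n)) : consLetter a e 0 = a := by
  simp [consLetter]

@[simp]
theorem consLetter_succ (a : Fin (n + 1)) (e : Perm (Fin n)) (i : Fin n) :
    consLetter a e i.succ = a.succAbove (e i) := by
  simp [consLetter]

@[simp]
theorem sign_consLetter (a : Fin (n + 1)) (e : Perm (Fin n)) :
    sign (consLetter a e) = (-1) ^ (a : ℕ) * sign e := by
  simp [consLetter]

theorem consLetter_injective (a : Fin (n + 1)) : Function.Injective (consLetter a) := by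
  intro e e' h
  simpa [consLetter] using h

/-- The permutation that fixes `a` and acts like `e` on the remaining letters. -/
def extendFixing (a : Fin (n + 1)) (e : Perm (Fin n)) : Perm (Fin (n + 1)) :=
  consLetter a e * a.cycleRange

@[simp]
theorem extendFixing_self (a : Fin (n + 1)) (e : Perm (Fin n)) : extendFixing a e a = a := by
  simp [extendFixing]

@[simp]
theorem extendFixing_succAbove (a : Fin (n + 1)) (e : Perm (Fin n)) (i : Fin n) :
    extendFixing a e (a.succAbove i) = a.succAbove (e i) := by
  simp [extendFixing]

@[simp]
theorem sign_extendFixing (a : Fin (n + 1)) (e : Perm (Fin n)) :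
    sign (extendFixing a e) = sign e := by
  simp [extendFixing, mul_right_comm, ← mul_pow]

/-- The permutation obtained from `e`, acting on the letters other than `a`, by inserting `a`
directly after `0` into the cycle of `0`; for `a = 0` it fixes `0`. -/
def insertCycle (a : Fin (n + 1)) (e : Perm (Fin n)) : Perm (Fin (n + 1)) :=
  extendFixing a e * swap 0 a

@[simp]
theorem insertCycle_zero (a : Fin (n + 1)) (e : Perm (Fin n)) : insertCycle a e 0 = a := by
  simp [insertCycle]

/-- The correction of `insertCycle a e` that has the sign of `consLetter a e`. The subtraction is
truncated, so the letters `0` and `1` are exchanged exactly for even `a ≥ 2`. -/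
def insertLetter (a : Fin (n + 1)) (e : Perm (Fin n)) : Perm (Fin (n + 1)) :=
  swap 0 1 ^ (a - 1 : ℕ) * insertCycle a e

@[simp]
theorem sign_insertLetter (a : Fin (n + 1)) (e : Perm (Fin n)) :
    sign (insertLetter a e) = (-1) ^ (a : ℕ) * sign e := by
  cases a using Fin.cases with
  | zero => simp [insertLetter, insertCycle]
  | succ c =>
    have : NeZero n := ⟨c.pos.ne'⟩
    have h01 : sign (swap 0 1 : Perm (Fin (n + 1))) = -1 := sign_swap Fin.zero_ne_one'
    have h0c : sign (swap 0 c.succ) = -1 := sign_swap (Fin.succ_ne_zero c).symm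
    simp [insertLetter, insertCycle, h01, h0c, pow_succ]

theorem insertLetter_injective (a : Fin (n + 1)) : Function.Injective (insertLetter a) := by
  intro e e' h
  simp only [insertLetter, insertCycle, extendFixing, mul_right_inj, mul_left_inj] at h
  exact consLetter_injective a h

theorem insertLetter_of_le_one {a : Fin (n + 1)} (ha : (a : ℕ) ≤ 1) (e : Perm (Fin n)) :
    insertLetter a e = insertCycle a e := by
  rw [insertLetter, Nat.sub_eq_zero_of_le ha, pow_zero, one_mul]

theorem one_lt_of_one_lt_val {a : Fin (n + 1)} (ha : 1 < (a : ℕ)) : 1 < a :=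
  (Nat.mod_le 1 (n + 1)).trans_lt ha

theorem swap_zero_one_pow_apply_of_one_lt {x : Fin (n + 1)} (hx : 1 < x) (k : ℕ) :
    ((swap 0 1 : Perm (Fin (n + 1))) ^ k) x = x :=
  pow_apply_eq_self_of_apply_eq_self
    (swap_apply_of_ne_of_ne ((Fin.zero_le _).trans_lt hx).ne' hx.ne') k

@[simp]
theorem insertLetter_zero (a : Fin (n + 1)) (e : Perm (Fin n)) : insertLetter a e 0 = a := by
  rcases le_or_gt (a : ℕ) 1 with ha | ha
  · rw [insertLetter_of_le_one ha, insertCycle_zero]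
  · rw [insertLetter, mul_apply, insertCycle_zero,
      swap_zero_one_pow_apply_of_one_lt (one_lt_of_one_lt_val ha)]

theorem bijective_uncurry_of_apply_zero
    {F : Fin (n + 1) → Perm (Fin n) → Perm (Fin (n + 1))} (hzero : ∀ a e, F a e 0 = a)
    (hinj : ∀ a, Function.Injective (F a)) : Function.Bijective (Function.uncurry F) := by
  refine (Fintype.bijective_iff_injective_and_card _).2 ⟨?_, ?_⟩
  · rintro ⟨a, e⟩ ⟨b, e'⟩ h
    obtain rfl : a = b := by simpa [hzero] using congrArg (· 0) h
    exact congrArg (Prod.mk a) (hinj a h)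
  · simp [Fintype.card_perm, Nat.factorial_succ]

/-- A permutation is determined by its first letter and the order of its remaining letters. -/
noncomputable def consLetterEquiv (n : ℕ) : Fin (n + 1) × Perm (Fin n) ≃ Perm (Fin (n + 1)) :=
  .ofBijective _ (bijective_uncurry_of_apply_zero consLetter_zero consLetter_injective)

/-- The analogue of `consLetterEquiv` for the insertion of letters into cycles. -/
noncomputable def insertLetterEquiv (n : ℕ) : Fin (n + 1) × Perm (Fin n) ≃ Perm (Fin (n + 1)) :=
  .ofBijective _ (bijective_uncurry_of_apply_zero insertLetter_zero insertLetter_injective)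

/-- The bijection `Φ` that carries `drp` to `depth`: decompose the one-line notation by deleting
first letters and rebuild a permutation with `insertLetter`. -/
noncomputable def dropToDepth : (n : ℕ) → Perm (Fin n) ≃ Perm (Fin n)
  | 0 => .refl _
  | n + 1 => (consLetterEquiv n).symm.trans <|
      (prodCongrRight fun _ => dropToDepth n).trans (insertLetterEquiv n)

theorem exists_consLetter_eq (σ : Perm (Fin (n + 1))) : ∃ a e, consLetter a e = σ := by
  obtain ⟨⟨a, e⟩, h⟩ := (consLetterEquiv n).surjective σ
  exact ⟨a, e, h⟩

theorem dropToDepth_consLetter (a : Fin (n + 1)) (e : Perm (Fin n)) :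
    dropToDepth (n + 1) (consLetter a e) = insertLetter a (dropToDepth n e) := by
  have h : (consLetterEquiv n).symm (consLetter a e) = (a, e) :=
    (consLetterEquiv n).symm_apply_eq.2 rfl
  rw [dropToDepth, trans_apply, h]
  rfl

theorem dropToDepth_apply_zero (σ : Perm (Fin (n + 1))) :
    dropToDepth (n + 1) σ 0 = σ 0 := by
  obtain ⟨a, e, rfl⟩ := exists_consLetter_eq σ
  rw [dropToDepth_consLetter, insertLetter_zero, consLetter_zero]

theorem sign_dropToDepth (σ : Perm (Fin n)) : sign (dropToDepth n σ) = sign σ := by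
  induction n with
  | zero => rfl
  | succ n ih =>
    obtain ⟨a, e, rfl⟩ := exists_consLetter_eq σ
    rw [dropToDepth_consLetter, sign_insertLetter, sign_consLetter, ih]

/-- The depth of `σ` when the letter `i` has weight `v i`: the sum of the differences
`v (σ i) - v i` over the excedances of `σ`, which truncated subtraction selects for monotone `v`. -/
def depthSum {ι : Type*} [Fintype ι] (v : ι → ℕ) (σ : Perm ι) : ℕ :=
  ∑ i, (v (σ i) - v i)

/-- The sum of the drops of the word `v (σ 0), v (σ 1), …`, which truncated subtraction selects. -/
def dropSum (v : Fin (n + 1) → ℕ) (σ : Perm (Fin (n + 1))) : ℕ :=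
  ∑ i : Fin n, (v (σ i.castSucc) - v (σ i.succ))

theorem depthSum_mul_of_forall_lt {ι : Type*} [Fintype ι] [LinearOrder ι] {v : ι → ℕ}
    (hv : Monotone v) {m : ι} {π σ : Perm ι} (hπ : ∀ x, m < x → π x = x)
    (hσ : ∀ i, i < m → m < σ i) : depthSum v (π * σ) = depthSum v σ := by
  refine sum_congr rfl fun i _ => ?_
  rcases lt_or_ge m (σ i) with h | h
  · rw [mul_apply, hπ _ h]
  · have hm : m ≤ i := le_of_not_gt fun hi => (hσ i hi).not_ge h
    have hπσ : π (σ i) ≤ m := le_of_not_gt fun hlt => by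
      rw [π.injective (hπ _ hlt)] at hlt
      exact hlt.not_ge h
    rw [mul_apply, Nat.sub_eq_zero_of_le (hv (hπσ.trans hm)),
      Nat.sub_eq_zero_of_le (hv (h.trans hm))]

theorem dropSum_consLetter (v : Fin (n + 2) → ℕ) (a : Fin (n + 2))
    (e : Perm (Fin (n + 1))) :
    dropSum v (consLetter a e) =
      (v a - v (a.succAbove (e 0))) + dropSum (v ∘ a.succAbove) e := by
  rw [dropSum, Fin.sum_univ_succ]
  simp only [dropSum, Fin.castSucc_zero, ← Fin.succ_castSucc, consLetter_zero, consLetter_succ,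
    Function.comp_apply]

theorem depthSum_insertCycle {v : Fin (n + 2) → ℕ} (hv : Monotone v) (a : Fin (n + 2))
    (e : Perm (Fin (n + 1))) :
    depthSum v (insertCycle a e) =
      (v a - v (a.succAbove (e 0))) + depthSum (v ∘ a.succAbove) e := by
  have hreindex : depthSum v (insertCycle a e) =
      (v a - v 0) + ∑ j, (v (a.succAbove (e j)) - v (swap 0 a (a.succAbove j))) := by
    rw [depthSum, ← Equiv.sum_comp (swap 0 a), Fin.sum_univ_succAbove _ a]
    simp [insertCycle]
  rw [hreindex]
  cases a using Fin.cases with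
  | zero => simp [depthSum, Nat.sub_eq_zero_of_le (hv (Fin.zero_le _))]
  | succ c =>
    have hswap : ∀ j : Fin n, swap 0 c.succ (c.succ.succAbove j.succ) = c.succ.succAbove j.succ :=
      fun j => swap_apply_of_ne_of_ne (by simp) (Fin.succAbove_ne _ _)
    have h0a : v 0 ≤ v c.succ := hv (Fin.zero_le _)
    have h0e : v 0 ≤ v (c.succ.succAbove (e 0)) := hv (Fin.zero_le _)
    simp only [depthSum, Fin.sum_univ_succ, hswap, Fin.succ_succAbove_zero, swap_apply_left,
      Function.comp_apply]
    -- Apart from the common tail, both sides equal `max (v a) (v x) - v 0`, where `x` is the letter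
    -- `a.succAbove (e 0)`.
    omega

theorem depthSum_insertLetter {v : Fin (n + 1) → ℕ} (hv : Monotone v) (a : Fin (n + 1))
    (e : Perm (Fin n)) : depthSum v (insertLetter a e) = depthSum v (insertCycle a e) := by
  rcases le_or_gt (a : ℕ) 1 with ha | ha
  · rw [insertLetter_of_le_one ha]
  · refine depthSum_mul_of_forall_lt hv (m := 1)
      (fun x hx => swap_zero_one_pow_apply_of_one_lt hx _) fun i hi => ?_
    obtain rfl : i = 0 := Fin.ext <| Nat.lt_one_iff.1 <|
      (Fin.lt_def.1 hi).trans_le (Nat.mod_le 1 (n + 1))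
    rw [insertCycle_zero]
    exact one_lt_of_one_lt_val ha

theorem depthSum_dropToDepth {v : Fin (n + 1) → ℕ} (hv : Monotone v)
    (σ : Perm (Fin (n + 1))) : depthSum v (dropToDepth (n + 1) σ) = dropSum v σ := by
  induction n with
  | zero => simp [depthSum, dropSum, Subsingleton.elim (dropToDepth 1 σ 0) 0]
  | succ n ih =>
    obtain ⟨a, e, rfl⟩ := exists_consLetter_eq σ
    rw [dropToDepth_consLetter, depthSum_insertLetter hv, depthSum_insertCycle hv,
      dropSum_consLetter, dropToDepth_apply_zero, ih (hv.comp a.strictMono_succAbove.monotone)]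

end DropToDepth

theorem oneLine_succ {n : ℕ} (π : Equiv.Perm (Fin n)) (i : Fin n) :
    oneLine π (i + 1) = π i + 1 := by
  simp [oneLine]

@[to_additive]
theorem prod_Icc_eq_prod_fin {M : Type*} [CommMonoid M] (n : ℕ) (F : ℕ → M) :
    ∏ i ∈ Icc 1 n, F i = ∏ i : Fin n, F (i + 1) := by
  rw [Fin.prod_univ_eq_prod_range (fun i => F (i + 1)), range_eq_Ico, prod_Ico_add' F 0 n 1]
  rfl

theorem depthStat_eq_depthSum {n : ℕ} (π : Equiv.Perm (Fin n)) :
    depthStat π = depthSum Fin.val π := by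
  rw [depthStat, sum_filter, sum_Icc_eq_sum_fin, depthSum]
  refine sum_congr rfl fun i _ => ?_
  rw [oneLine_succ]
  split_ifs <;> omega

theorem drpStat_eq_dropSum {n : ℕ} (π : Equiv.Perm (Fin (n + 1))) :
    drpStat π = dropSum Fin.val π := by
  rw [drpStat, sum_filter, Nat.add_sub_cancel, sum_Icc_eq_sum_fin, dropSum]
  refine sum_congr rfl fun i _ => ?_
  have hleft : oneLine π (i + 1) = π i.castSucc + 1 := oneLine_succ π i.castSucc
  have hright : oneLine π (i + 1 + 1) = π i.succ + 1 := oneLine_succ π i.succ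
  rw [hleft, hright]
  split_ifs <;> omega

theorem neg_one_pow_invNum {n : ℕ} (π : Equiv.Perm (Fin n)) :
    (-1 : ℤ) ^ invNum π = Equiv.Perm.sign π := by
  rw [Equiv.Perm.sign_eq_prod_prod_Iio, invNum, ← prod_const, prod_filter, prod_product_right,
    prod_Icc_eq_prod_fin, Units.coe_prod]
  refine prod_congr rfl fun j _ => ?_
  rw [prod_Icc_eq_prod_fin, Units.coe_prod]
  have hIio : Iio j = ({i | i < j} : Finset (Fin n)) := by ext; simp
  rw [hIio, prod_filter]
  refine prod_congr rfl fun i _ => ?_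
  have hne : i < j → (π i : ℕ) ≠ π j := fun h => by simpa [Fin.val_inj] using h.ne
  simp only [oneLine_succ, Fin.lt_def, add_lt_add_iff_right] at hne ⊢
  split_ifs <;> first | rfl | omega

/-- there is a bijection Φ of 𝔖ₙ preserving the first letter and the sign,
carrying drp to depth: depth(Φ(π)) = drp(π). -/
theorem stmt9 (n : ℕ) (hn : 0 < n) :
    ∃ Φ : Equiv.Perm (Fin n) → Equiv.Perm (Fin n), Function.Bijective Φ ∧
      ∀ π : Equiv.Perm (Fin n),
        oneLine (Φ π) 1 = oneLine π 1 ∧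
        ((-1 : ℤ) ^ invNum (Φ π) = (-1 : ℤ) ^ invNum π) ∧
        depthStat (Φ π) = drpStat π := by
  obtain ⟨m, rfl⟩ := Nat.exists_eq_succ_of_ne_zero hn.ne'
  refine ⟨dropToDepth (m + 1), (dropToDepth (m + 1)).bijective, fun π => ⟨?_, ?_, ?_⟩⟩
  · have hfirst (σ : Equiv.Perm (Fin (m + 1))) : oneLine σ 1 = σ 0 + 1 := oneLine_succ σ 0
    rw [hfirst, hfirst, dropToDepth_apply_zero]
  · rw [neg_one_pow_invNum, neg_one_pow_invNum, sign_dropToDepth]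
  · rw [depthStat_eq_depthSum, drpStat_eq_dropSum, depthSum_dropToDepth Fin.val_strictMono.monotone]
end

section
/- For every positive integer n and every subset I of {1,...,n}, the number of permutations π of {1,...,n} with Êxc(π) = I equals the number of permutations π of {1,...,n} with Asc₂(π) = I. -/
open Finset

/-!
Let `w` be a word with distinct letters. Cut it in front of each left-to-right minimum and read the
factors as the cycles of a permutation `foata w`. A factor starts with its smallest letter, so the
step closing its cycle is not an excedance, and between two factors the word descends to a new
minimum. Hence `a < b` satisfy `foata w a = b` exactly when `a` and `b` are adjacent letters of `w`
in this order. The word can be recovered from `foata w` from right to left: the left-to-right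
minimum at a position is the smallest letter which does not occur after that position.

Precomposing `foata w` with the inverse of the cycle `i ↦ i + 1` moves positions one to the right.
This turns the pairs `a + 2 ≤ b` with `foata w a = b` into the excedances counted by `ExcHat`, where
position `1` is left out because it now carries the image of `n`.
-/

section PrefixMin

variable {ι α : Type*} [LinearOrder ι] [LocallyFiniteOrderBot ι] [LinearOrder α]

/-- The smallest letter of the word `w` among the positions up to `i`, that is, the last
left-to-right minimum of `w` at or before `i`. -/
def prefixMin (w : ι → α) (i : ι) : α :=
  (Iic i).inf' nonempty_Iic w

theorem isLeast_prefixMin (w : ι → α) (i : ι) : IsLeast (w '' Set.Iic i) (prefixMin w i) := by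
  obtain ⟨j, hj, hmin⟩ := exists_mem_eq_inf' (nonempty_Iic (a := i)) w
  exact ⟨⟨j, mem_Iic.1 hj, hmin.symm⟩, Set.forall_mem_image.2 fun k hk => inf'_le w (mem_Iic.2 hk)⟩

theorem prefixMin_le (w : ι → α) {i j : ι} (h : j ≤ i) : prefixMin w i ≤ w j :=
  (isLeast_prefixMin w i).2 (Set.mem_image_of_mem w h)

theorem prefixMin_antitone (w : ι → α) : Antitone (prefixMin w) := fun i j hij =>
  (isLeast_prefixMin w i).mono (isLeast_prefixMin w j) (Set.image_mono (Set.Iic_subset_Iic.2 hij))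

theorem prefixMin_ne_of_lt {w : ι → α} (hw : Function.Injective w) {i j : ι} (h : i < j) :
    prefixMin w i ≠ w j := by
  obtain ⟨k, hki, hk⟩ := (isLeast_prefixMin w i).1
  exact fun hj => (lt_of_le_of_lt hki h).ne (hw (hk.trans hj))

theorem prefixMin_eq_of_eqOn_Ioi {w v : ι ≃ α} {i : ι} (h : Set.EqOn w v (Set.Ioi i)) :
    prefixMin w i = prefixMin v i := by
  have himage : w '' Set.Iic i = v '' Set.Iic i := by
    rw [← Set.compl_Ioi, Set.image_compl_eq w.bijective, Set.image_compl_eq v.bijective, h.image_eq]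
  exact (isLeast_prefixMin w i).unique (himage ▸ isLeast_prefixMin v i)

end PrefixMin

section Foata

open Order

variable {ι α : Type*} [LinearOrder ι] [LocallyFiniteOrderBot ι] [SuccOrder ι] [LinearOrder α]

open Classical in
/-- The letter following `w i` in its cycle when the word `w` is cut in front of its left-to-right
minima and each factor is read as a cycle. The last position is treated separately because
`Order.succ` fixes it. -/
noncomputable def foataNext (w : ι → α) (i : ι) : α :=
  if IsMax i then prefixMin w i else max (w (succ i)) (prefixMin w i)

theorem foataNext_of_covBy {w : ι → α} {i k : ι} (h : i ⋖ k) :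
    foataNext w i = max (w k) (prefixMin w i) := by
  rw [foataNext, if_neg h.lt.not_isMax, h.succ_eq]

theorem foataNext_eq_apply_or_eq_prefixMin {w : ι → α} (hw : Function.Injective w) (i : ι) :
    (∃ k, i ⋖ k ∧ prefixMin w i < w k ∧ foataNext w i = w k) ∨
      ((∀ k, i < k → prefixMin w k < prefixMin w i) ∧ foataNext w i = prefixMin w i) := by
  by_cases hi : IsMax i
  · exact .inr ⟨fun k hk => absurd hk hi.not_lt, if_pos hi⟩
  have hcov := covBy_succ_of_not_isMax hi
  rcases (prefixMin_ne_of_lt hw hcov.lt).lt_or_gt with hlt | hgt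
  · exact .inl ⟨succ i, hcov, hlt, (foataNext_of_covBy hcov).trans (max_eq_left hlt.le)⟩
  · exact .inr ⟨fun k hk => (prefixMin_le w (succ_le_of_lt hk)).trans_lt hgt,
      (foataNext_of_covBy hcov).trans (max_eq_right hgt.le)⟩

theorem foataNext_ne_of_lt {w : ι → α} (hw : Function.Injective w) {i j : ι} (hij : i < j) :
    foataNext w i ≠ foataNext w j := by
  rcases foataNext_eq_apply_or_eq_prefixMin hw i with ⟨k, hik, hlt, hi⟩ | ⟨hmin, hi⟩ <;>
    rcases foataNext_eq_apply_or_eq_prefixMin hw j with ⟨l, hjl, -, hj⟩ | ⟨-, hj⟩ <;>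
    rw [hi, hj]
  · intro hkl
    obtain rfl := hw hkl
    exact hij.ne (hik.unique_left hjl)
  · exact ((prefixMin_antitone w hij.le).trans_lt hlt).ne'
  · exact prefixMin_ne_of_lt hw (hij.trans hjl.lt)
  · exact (hmin j hij).ne'

theorem foataNext_injective {w : ι → α} (hw : Function.Injective w) :
    Function.Injective (foataNext w) :=
  .of_lt_imp_ne fun _ _ => foataNext_ne_of_lt hw

theorem foataNext_eq_apply_iff_covBy {w : ι → α} (hw : Function.Injective w) {i k : ι}
    (h : w i < w k) : foataNext w i = w k ↔ i ⋖ k := by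
  have hmin : prefixMin w i < w k := (prefixMin_le w le_rfl).trans_lt h
  refine ⟨fun hnext => ?_, fun hik => (foataNext_of_covBy hik).trans (max_eq_left hmin.le)⟩
  rcases foataNext_eq_apply_or_eq_prefixMin hw i with ⟨l, hil, -, hl⟩ | ⟨-, hi⟩
  · exact hw (hl.symm.trans hnext) ▸ hil
  · exact absurd (hi.symm.trans hnext) hmin.ne

theorem foataNext_eq_of_eqOn_Ioi {w v : ι ≃ α} {i : ι} (h : Set.EqOn w v (Set.Ioi i)) :
    foataNext w i = foataNext v i := by
  unfold foataNext
  split_ifs with hi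
  · exact prefixMin_eq_of_eqOn_Ioi h
  · rw [prefixMin_eq_of_eqOn_Ioi h, h (lt_succ_of_not_isMax hi)]

variable [Finite α]

/-- Foata's fundamental transformation: the permutation whose cycles are the factors obtained by
cutting the word `w` in front of each left-to-right minimum. -/
noncomputable def foata (w : ι ≃ α) : Equiv.Perm α :=
  Equiv.ofBijective (foataNext w ∘ w.symm) <|
    Finite.injective_iff_bijective.1 ((foataNext_injective w.injective).comp w.symm.injective)

theorem foata_apply (w : ι ≃ α) (i : ι) : foata w (w i) = foataNext w i := by
  simp only [foata, Equiv.ofBijective_apply, Function.comp_apply, Equiv.symm_apply_apply]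

theorem foata_apply_eq_iff_covBy (w : ι ≃ α) {i k : ι} (h : w i < w k) :
    foata w (w i) = w k ↔ i ⋖ k := by
  rw [foata_apply, foataNext_eq_apply_iff_covBy w.injective h]

theorem foata_injective : Function.Injective (foata : (ι ≃ α) → Equiv.Perm α) := by
  intro w v hwv
  have : Finite ι := .of_equiv α w.symm
  refine Equiv.ext fun i => ?_
  induction i using WellFoundedGT.induction with
  | ind i ih =>
    have hnext : foataNext w i = foataNext v i := foataNext_eq_of_eqOn_Ioi fun j hj => ih j hj
    apply (foata w).injective
    rw [foata_apply, hnext, hwv, foata_apply]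

end Foata

section Statistics

variable {n : ℕ}

theorem oneLine_val_add_one (π : Equiv.Perm (Fin n)) (i : Fin n) :
    oneLine π (i + 1) = π i + 1 := by
  simp only [oneLine, Nat.add_sub_cancel, Fin.is_lt, ↓reduceDIte, Fin.eta]

theorem mem_Asc2_iff (w : Equiv.Perm (Fin n)) (b : ℕ) :
    b ∈ Asc2 w ↔ ∃ i k : Fin n, i ⋖ k ∧ (w i : ℕ) + 2 ≤ w k ∧ (w k : ℕ) + 1 = b := by
  simp only [Asc2, mem_image, mem_filter, mem_Icc, Fin.covBy_iff, Nat.covBy_iff_add_one_eq]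
  constructor
  · rintro ⟨p, ⟨⟨hp, hpn⟩, hasc⟩, rfl⟩
    obtain ⟨i, rfl⟩ := Nat.exists_eq_add_of_le' hp
    have hi := oneLine_val_add_one w ⟨i, by lia⟩
    have hk := oneLine_val_add_one w ⟨i + 1, by lia⟩
    exact ⟨⟨i, by lia⟩, ⟨i + 1, by lia⟩, rfl, by lia, hk.symm⟩
  · rintro ⟨i, k, hik, hasc, rfl⟩
    have hi := oneLine_val_add_one w i
    have hk := oneLine_val_add_one w k
    rw [← hik] at hk
    exact ⟨i + 1, ⟨by lia, by lia⟩, hk⟩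

theorem mem_ExcHat_iff (π : Equiv.Perm (Fin n)) (b : ℕ) :
    b ∈ ExcHat π ↔ ∃ i : Fin n, (i : ℕ) ≠ 0 ∧ i < π i ∧ (π i : ℕ) + 1 = b := by
  simp only [ExcHat, mem_image, mem_filter, mem_Icc]
  constructor
  · rintro ⟨p, ⟨⟨hp, hpn⟩, hexc⟩, rfl⟩
    obtain ⟨i, rfl⟩ := Nat.exists_eq_add_of_le' (one_le_two.trans hp)
    have hi := oneLine_val_add_one π ⟨i, by lia⟩
    exact ⟨⟨i, by lia⟩, by simp only; lia, Fin.lt_def.2 (by simp only; lia), hi.symm⟩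
  · rintro ⟨i, hi0, hexc, rfl⟩
    have hi := oneLine_val_add_one π i
    exact ⟨i + 1, ⟨by lia, by lia⟩, hi⟩

theorem finRotate_ne_zero_and_lt_iff (j b : Fin n) :
    (finRotate n j : ℕ) ≠ 0 ∧ finRotate n j < b ↔ (j : ℕ) + 2 ≤ b := by
  cases n with
  | zero => exact j.elim0
  | succ n =>
    rw [Fin.lt_def, coe_finRotate]
    split_ifs with hj
    · simp only [hj, Fin.val_last]
      lia
    · lia

theorem mem_ExcHat_mul_finRotate_inv_iff (σ : Equiv.Perm (Fin n)) (b : ℕ) :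
    b ∈ ExcHat (σ * (finRotate n)⁻¹) ↔
      ∃ a c : Fin n, σ a = c ∧ (a : ℕ) + 2 ≤ c ∧ (c : ℕ) + 1 = b := by
  rw [mem_ExcHat_iff, (finRotate n).surjective.exists]
  simp only [Equiv.Perm.mul_apply, Equiv.Perm.inv_def, Equiv.symm_apply_apply, and_assoc,
    exists_eq_left', ← finRotate_ne_zero_and_lt_iff]

theorem ExcHat_foata_mul_finRotate_inv (w : Equiv.Perm (Fin n)) :
    ExcHat (foata w * (finRotate n)⁻¹) = Asc2 w := by
  ext b
  have hcov (i k : Fin n) (h : (w i : ℕ) + 2 ≤ w k) : foata w (w i) = w k ↔ i ⋖ k :=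
    foata_apply_eq_iff_covBy w (Fin.lt_def.2 (by lia))
  calc b ∈ ExcHat (foata w * (finRotate n)⁻¹)
    _ ↔ ∃ i k, foata w (w i) = w k ∧ (w i : ℕ) + 2 ≤ w k ∧ (w k : ℕ) + 1 = b := by
      rw [mem_ExcHat_mul_finRotate_inv_iff, w.surjective.exists₂]
    _ ↔ ∃ i k, i ⋖ k ∧ (w i : ℕ) + 2 ≤ w k ∧ (w k : ℕ) + 1 = b :=
      exists₂_congr fun i k => and_congr_left fun h => hcov i k h.1
    _ ↔ b ∈ Asc2 w := (mem_Asc2_iff w b).symm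

theorem foata_mul_finRotate_inv_bijective :
    Function.Bijective fun w : Equiv.Perm (Fin n) => foata w * (finRotate n)⁻¹ :=
  Finite.injective_iff_bijective.1 ((mul_left_injective _).comp foata_injective)

end Statistics

/-- Êxc and Asc₂ are equidistributed as set-valued statistics. -/
theorem stmt15 (n : ℕ) (hn : 0 < n) (I : Finset ℕ) (hI : I ⊆ Finset.Icc 1 n) :
    (Finset.univ.filter (fun π : Equiv.Perm (Fin n) => ExcHat π = I)).card =
      (Finset.univ.filter (fun π : Equiv.Perm (Fin n) => Asc2 π = I)).card := by
  refine (card_bijective _ foata_mul_finRotate_inv_bijective fun w => ?_).symm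
  simp only [mem_filter_univ, ExcHat_foata_mul_finRotate_inv]
end
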